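/- Let 𝒞 be a root class of groups. Then the free product G₁ * G₂ of two groups that are each residually a 𝒞-group is residually a 𝒞-group. -/

import Mathlib

universe u

/-- A class of groups: a predicate on groups. -/
def GClass : Type (u + 1) := ∀ (G : Type u) [Group G], Prop

/-- Closure under isomorphism. -/
def ClosedIso (C : GClass.{u}) : Prop :=
  ∀ (G H : Type u) [Group G] [Group H], (G ≃* H) → C G → C H

/-- Closure under taking subgroups. -/
def ClosedSub (C : GClass.{u}) : Prop :=
  ∀ (G : Type u) [Group G] (H : Subgroup G), C G → C H

/-- Closure under extensions. -/
def ClosedExt (C : GClass.{u}) : Prop :=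
  ∀ (G : Type u) [Group G] (N : Subgroup G) [N.Normal], C N → C (G ⧸ N) → C G

/-- Closure under unrestricted direct powers ∏_{y ∈ Y} X with X, Y ∈ C. -/
def ClosedPow (C : GClass.{u}) : Prop :=
  ∀ (X Y : Type u) [Group X] [Group Y], C X → C Y → C (Y → X)

/-- A root class of groups. -/
def IsRootClass (C : GClass.{u}) : Prop :=
  (∃ (G : Type u) (_ : Group G), C G ∧ Nontrivial G) ∧
    ClosedIso C ∧ ClosedSub C ∧ ClosedExt C ∧ ClosedPow C

/-- `G` is residually a `C`-group. -/
def Residually (C : GClass.{u}) (G : Type u) [Group G] : Prop :=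
  ∀ g : G, g ≠ 1 → ∃ (Q : Type u) (_ : Group Q) (σ : G →* Q),
    C Q ∧ Function.Surjective σ ∧ σ g ≠ 1

/-!
Let `m s₁ ⋯ sₙ` be a reduced word of the free product with `m ∈ G i`. By induction on the length,
some homomorphism `φ` to a `C`-group `P` kills neither `m` nor any `s₁ ⋯ sₖ` with `k ≥ 1`. Map the
free product to the wreath product `X ≀ᵣ P`, where `X` is a nontrivial `C`-group: on every factor
take `φ` followed by the section `P → X ≀ᵣ P`, but conjugate it on `G i` by a function `P → X`
supported at the single point `t = (φ m)⁻¹`. In the image of the word, the coordinate at `1` is a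
product over the letters, in which a letter of `G i` contributes only if the path `p ↦ (φ p)⁻¹` of
prefixes enters or leaves `t` with it. The path enters `t` with `m`, leaves it with `s₁ ∉ G i`, and
never returns, so this coordinate is not `1`. The same homomorphism works for all nonempty prefixes
of the word, which keeps the induction going.
-/

section Closure

variable {C : GClass.{u}}

lemma IsRootClass.closedSub (hC : IsRootClass C) : ClosedSub C := hC.2.2.1

lemma ClosedExt.of_groupExtension (hExt : ClosedExt C) (hIso : ClosedIso C) {N E Q : Type u}
    [Group N] [Group E] [Group Q] (S : GroupExtension N E Q) (hN : C N) (hQ : C Q) : C E := by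
  have hKer : C S.rightHom.ker := S.range_inl_eq_ker_rightHom ▸
    hIso _ _ (MonoidHom.ofInjective S.inl_injective) hN
  have hQuot : C (E ⧸ S.rightHom.ker) :=
    hIso _ _ (QuotientGroup.quotientKerEquivOfSurjective _ S.rightHom_surjective).symm hQ
  exact hExt E S.rightHom.ker hKer hQuot

lemma ClosedExt.prod (hExt : ClosedExt C) (hIso : ClosedIso C) {A B : Type u}
    [Group A] [Group B] (hA : C A) (hB : C B) : C (A × B) :=
  hExt.of_groupExtension hIso
    { inl := MonoidHom.inl A B
      rightHom := MonoidHom.snd A B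
      inl_injective := Prod.mk_left_injective 1
      range_inl_eq_ker_rightHom := by
        ext ⟨a, b⟩
        simp [Subgroup.mem_prod, eq_comm]
      rightHom_surjective := Prod.snd_surjective } hA hB

/-- The regular wreath product `X ≀ᵣ P` as an extension of `P` by its base group `P → X`. -/
def regularWreathExtension (X P : Type*) [Group X] [Group P] :
    GroupExtension (P → X) (X ≀ᵣ P) P where
  inl :=
    { toFun := fun f ↦ ⟨f, 1⟩
      map_one' := rfl
      map_mul' := fun f f' ↦ by ext <;> simp }
  rightHom := RegularWreathProduct.rightHom
  inl_injective := fun _ _ h ↦ congrArg RegularWreathProduct.left h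
  range_inl_eq_ker_rightHom := by
    ext w
    exact ⟨fun ⟨_, h⟩ ↦ h ▸ rfl, fun h ↦ ⟨w.left, RegularWreathProduct.ext rfl (Eq.symm h)⟩⟩
  rightHom_surjective := fun p ↦ ⟨RegularWreathProduct.inl p, rfl⟩

lemma ClosedExt.regularWreathProduct (hExt : ClosedExt C) (hIso : ClosedIso C)
    (hPow : ClosedPow C) {X P : Type u} [Group X] [Group P] (hX : C X) (hP : C P) : C (X ≀ᵣ P) :=
  hExt.of_groupExtension hIso (regularWreathExtension X P) (hPow X P hX hP) hP

lemma ClosedSub.residually_of_forall_exists (hSub : ClosedSub C) {G : Type u} [Group G]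
    (h : ∀ g : G, g ≠ 1 → ∃ (Q : Type u) (_ : Group Q) (σ : G →* Q), C Q ∧ σ g ≠ 1) :
    Residually C G := by
  intro g hg
  obtain ⟨Q, _, σ, hQ, hσ⟩ := h g hg
  exact ⟨σ.range, inferInstance, σ.rangeRestrict, hSub Q _ hQ, σ.rangeRestrict_surjective,
    fun hg' ↦ hσ (congrArg Subtype.val hg')⟩

lemma Residually.of_injective {G H : Type u} [Group G] [Group H] (hH : Residually C H)
    (hSub : ClosedSub C) (f : G →* H) (hf : Function.Injective f) : Residually C G := by
  refine hSub.residually_of_forall_exists fun g hg ↦ ?_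
  obtain ⟨Q, _, σ, hQ, -, hσ⟩ := hH (f g) ((map_ne_one_iff f hf).mpr hg)
  exact ⟨Q, _, σ.comp f, hQ, hσ⟩

end Closure

section WreathTwist

open Monoid

variable {ι : Type*} {G : ι → Type*} [∀ i, Group (G i)]

/-- The element of the free product spelled by a list of letters, which need not be reduced. -/
def letterProd (l : List (Σ i, G i)) : CoprodI G :=
  (l.map fun s ↦ CoprodI.of s.2).prod

@[simp]
lemma letterProd_nil : letterProd ([] : List (Σ i, G i)) = 1 := rfl

lemma letterProd_cons (s : Σ i, G i) (l : List (Σ i, G i)) :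
    letterProd (s :: l) = CoprodI.of s.2 * letterProd l := by
  simp [letterProd]

lemma letterProd_concat (l : List (Σ i, G i)) (s : Σ i, G i) :
    letterProd (l ++ [s]) = letterProd l * CoprodI.of s.2 := by
  simp [letterProd]

variable {X P : Type*} [Group X] [Group P] (φ : CoprodI G →* P) (c : ι → P → X)

/-- The lift of `φ : CoprodI G →* P` to the wreath product `X ≀ᵣ P` obtained from the standard
section `P →* X ≀ᵣ P` by conjugating it, on each factor `G i`, by the element `c i` of the base
group. -/
def wreathTwist : CoprodI G →* X ≀ᵣ P :=
  CoprodI.lift fun i ↦ (MulAut.conj (⟨c i, 1⟩ : X ≀ᵣ P)).toMonoidHom.comp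
    (RegularWreathProduct.inl.comp (φ.comp CoprodI.of))

lemma wreathTwist_right (g : CoprodI G) : (wreathTwist φ c g).right = φ g := by
  have h : RegularWreathProduct.rightHom.comp (wreathTwist φ c) = φ := by
    ext i a
    simp [wreathTwist]
  exact DFunLike.congr_fun h g

lemma wreathTwist_mul_left (g g' : CoprodI G) (q : P) :
    (wreathTwist φ c (g * g')).left q =
      (wreathTwist φ c g).left q * (wreathTwist φ c g').left ((φ g)⁻¹ * q) := by
  simp [wreathTwist_right]

lemma wreathTwist_of_left {i : ι} (a : G i) (q : P) :
    (wreathTwist φ c (CoprodI.of a)).left q =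
      c i q * (c i ((φ (CoprodI.of a))⁻¹ * q))⁻¹ := by
  simp [wreathTwist]

lemma wreathTwist_letterProd_left_eq_one {l : List (Σ i, G i)} {q : P}
    (hhead : ∀ s ∈ l.head?, c s.1 q = 1)
    (hprefix : ∀ p, p <+: l → p ≠ [] → ∀ i, c i ((φ (letterProd p))⁻¹ * q) = 1) :
    (wreathTwist φ c (letterProd l)).left q = 1 := by
  induction l using List.reverseRecOn with
  | nil => simp
  | append_singleton l s ih =>
    have hl : (wreathTwist φ c (letterProd l)).left q = 1 :=
      ih (fun s' hs' ↦ hhead s' (List.mem_head?_append_of_mem_head? hs'))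
        fun p hp ↦ hprefix p (hp.trans (List.prefix_append l [s]))
    have hbefore : c s.1 ((φ (letterProd l))⁻¹ * q) = 1 := by
      rcases eq_or_ne l [] with rfl | hne
      · simpa using hhead s
      · exact hprefix l (List.prefix_append l [s]) hne s.1
    have hafter : c s.1 ((φ (letterProd (l ++ [s])))⁻¹ * q) = 1 :=
      hprefix _ List.prefix_rfl (by simp) s.1
    rw [letterProd_concat, map_mul, mul_inv_rev, mul_assoc] at hafter
    rw [letterProd_concat, wreathTwist_mul_left, hl, wreathTwist_of_left, hbefore, hafter]
    simp

lemma exists_wreathTwist_letterProd_cons_ne_one [Nontrivial X] {i : ι} {a : G i}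
    (ha : φ (CoprodI.of a) ≠ 1) : ∃ c : ι → P → X, ∀ l : List (Σ i, G i),
      (∀ s ∈ l.head?, i ≠ s.1) → (∀ p, p <+: l → p ≠ [] → φ (letterProd p) ≠ 1) →
        wreathTwist φ c (letterProd (⟨i, a⟩ :: l)) ≠ 1 := by
  classical
  obtain ⟨x, hx⟩ := exists_ne (1 : X)
  let t : P := (φ (CoprodI.of a))⁻¹
  let c : ι → P → X := Pi.mulSingle i (Pi.mulSingle t x)
  have hc_ne : ∀ {q}, q ≠ t → ∀ j, c j q = 1 := by
    intro q hq j
    rcases eq_or_ne j i with rfl | hj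
    · simp [c, hq]
    · simp [c, hj]
  have hc_t : c i t = x := by simp [c]
  refine ⟨c, fun l hhead hprefix h ↦ ?_⟩
  have htail : (wreathTwist φ c (letterProd l)).left t = 1 := by
    refine wreathTwist_letterProd_left_eq_one φ c (fun s hs ↦ ?_) fun p hp hne ↦ hc_ne ?_
    · simp [c, (hhead s hs).symm]
    · simpa using hprefix p hp hne
  have hleft : (wreathTwist φ c (letterProd (⟨i, a⟩ :: l))).left 1 = x⁻¹ := by
    rw [letterProd_cons, wreathTwist_mul_left, wreathTwist_of_left, mul_one, htail, hc_t,
      hc_ne (inv_ne_one.mpr ha).symm, one_mul, mul_one]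
  rw [h] at hleft
  exact hx (inv_eq_one.mp hleft.symm)

end WreathTwist

section FreeProduct

open Monoid

variable {C : GClass.{u}}

lemma Residually.exists_hom_of_ne_one {ι : Type*} {G : ι → Type u} [∀ i, Group (G i)] {i : ι}
    (hG : Residually C (G i)) {a : G i} (ha : a ≠ 1) :
    ∃ (Q : Type u) (_ : Group Q) (σ : CoprodI G →* Q), C Q ∧ σ (CoprodI.of a) ≠ 1 := by
  classical
  obtain ⟨Q, _, σ, hQ, -, hσ⟩ := hG a ha
  exact ⟨Q, _, CoprodI.lift (Pi.mulSingle i σ), hQ, by simpa using hσ⟩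

lemma IsRootClass.exists_hom_prefix_ne_one (hC : IsRootClass C) {ι : Type*} {G : ι → Type u}
    [∀ i, Group (G i)] (hG : ∀ i, Residually C (G i)) (w : CoprodI.Word G) :
    ∃ (Q : Type u) (_ : Group Q) (σ : CoprodI G →* Q), C Q ∧
      ∀ p, p <+: w.toList → p ≠ [] → σ (letterProd p) ≠ 1 := by
  obtain ⟨⟨X, _, hX, _⟩, hIso, -, hExt, hPow⟩ := hC
  induction w using CoprodI.Word.consRecOn with
  | empty => exact ⟨X, _, 1, hX, fun p hp hne ↦ absurd (List.prefix_nil.mp hp) hne⟩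
  | cons i a w hi ha ih =>
    obtain ⟨Q, _, ψ, hQ, hψ⟩ := ih
    obtain ⟨R, _, τ, hR, hτ⟩ := (hG i).exists_hom_of_ne_one ha
    let φ : CoprodI G →* R × Q := τ.prod ψ
    have hφa : φ (CoprodI.of a) ≠ 1 := fun h ↦ hτ (congrArg Prod.fst h)
    have hφw : ∀ p, p <+: w.toList → p ≠ [] → φ (letterProd p) ≠ 1 :=
      fun p hp hne h ↦ hψ p hp hne (congrArg Prod.snd h)
    obtain ⟨c, hc⟩ := exists_wreathTwist_letterProd_cons_ne_one (X := X) φ hφa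
    refine ⟨X ≀ᵣ (R × Q), _, wreathTwist φ c,
      hExt.regularWreathProduct hIso hPow hX (hExt.prod hIso hR hQ), fun p hp hne ↦ ?_⟩
    obtain ⟨l, rfl, hl⟩ := (List.prefix_cons_iff.mp hp).resolve_left hne
    refine hc l (fun s hs ↦ CoprodI.Word.fstIdx_ne_iff.mp hi s ?_) fun p hp ↦ hφw p (hp.trans hl)
    obtain ⟨r, hr⟩ := hl
    exact hr ▸ List.mem_head?_append_of_mem_head? hs

theorem stmt_19_general (hC : IsRootClass C) {ι : Type u} (G : ι → Type u) [∀ i, Group (G i)]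
    (hG : ∀ i, Residually C (G i)) : Residually C (CoprodI G) := by
  classical
  refine hC.closedSub.residually_of_forall_exists fun g hg ↦ ?_
  obtain ⟨w, rfl⟩ := CoprodI.Word.equiv.symm.surjective g
  obtain ⟨Q, _, σ, hQ, hσ⟩ := hC.exists_hom_prefix_ne_one hG w
  have hw : w.toList ≠ [] := fun hnil ↦ hg (congrArg letterProd hnil)
  exact ⟨Q, _, σ, hQ, hσ w.toList List.prefix_rfl hw⟩

variable (A B : Type u)

/-- The pair `A`, `B` as a family indexed by a two-element type in the universe `u`. -/
def pairFamily : PUnit.{u + 1} ⊕ PUnit.{u + 1} → Type u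
  | .inl _ => A
  | .inr _ => B

variable [Group A] [Group B]

instance : ∀ i, Group (pairFamily A B i)
  | .inl _ => inferInstanceAs (Group A)
  | .inr _ => inferInstanceAs (Group B)

/-- The comparison homomorphism from the binary free product to the indexed free product of
the corresponding two-element family. -/
def coprodToCoprodI : Coprod A B →* CoprodI (pairFamily A B) :=
  Coprod.lift (CoprodI.of (M := pairFamily A B) (i := .inl ⟨⟩))
    (CoprodI.of (M := pairFamily A B) (i := .inr ⟨⟩))

lemma coprodToCoprodI_injective : Function.Injective (coprodToCoprodI A B) := by
  let factorMap : ∀ i, pairFamily A B i →* Coprod A B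
    | .inl _ => Coprod.inl
    | .inr _ => Coprod.inr
  have h : (CoprodI.lift factorMap).comp (coprodToCoprodI A B) = MonoidHom.id _ :=
    Coprod.hom_ext (CoprodI.lift_comp_of factorMap (.inl ⟨⟩))
      (CoprodI.lift_comp_of factorMap (.inr ⟨⟩))
  exact Function.LeftInverse.injective (DFunLike.congr_fun h)

end FreeProduct

/-- Proposition 3.3 (2): the free product of two residually `C`-groups is residually
a `C`-group, for a root class `C`. -/
theorem stmt_19 (C : GClass.{u}) (hC : IsRootClass C)
    (G₁ G₂ : Type u) [Group G₁] [Group G₂]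
    (h₁ : Residually C G₁) (h₂ : Residually C G₂) :
    Residually C (Monoid.Coprod G₁ G₂) := by
  have hfamily : ∀ i, Residually C (pairFamily G₁ G₂ i) := Sum.rec (fun _ ↦ h₁) (fun _ ↦ h₂)
  exact (stmt_19_general hC _ hfamily).of_injective hC.closedSub _ (coprodToCoprodI_injective G₁ G₂)
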